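/- (ω̃ is d_tot-closed) One has d(ω_1(x)) = 0 for every x ∈ 𝔤; (d_𝔤 ω_{k−1})(x_1,…,x_k) = (−1)^k·d(ω_k(x_1,…,x_k)) for every 2 ≤ k ≤ n+1 and all x_1,…,x_k ∈ 𝔤; and d_𝔤 ω_{n+1} = 0. Equivalently, ω̃ := Σ_{k=1}^{n+1} (−1)^{k−1}ω_k is closed for the total differential d_tot acting on a family (ψ_k) of multilinear maps 𝔤^k → Ω by d_𝔤ψ_k + (−1)^k dψ_k. -/

import Mathlib

/-- Cartan calculus data over ℝ: a module `carrier` with graded pieces `deg i`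
(`deg i = ⊥` for `i < 0`), a degree-`+1` differential `d` squaring to zero,
a real Lie algebra `X`, contractions `ι v` of degree `-1` depending linearly on `v`,
pairwise anticommuting, and satisfying the Cartan relation
`𝓛_v ∘ ι_w - ι_w ∘ 𝓛_v = ι_[v,w]` where `𝓛_v = d ∘ ι_v + ι_v ∘ d`. -/
structure CartanCalculus where
  carrier : Type
  [addCommGroup : AddCommGroup carrier]
  [module : Module ℝ carrier]
  deg : ℤ → Submodule ℝ carrier
  deg_neg : ∀ i : ℤ, i < 0 → deg i = ⊥
  d : carrier →ₗ[ℝ] carrier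
  d_deg : ∀ i : ℤ, ∀ a ∈ deg i, d a ∈ deg (i + 1)
  d_d : ∀ a : carrier, d (d a) = 0
  X : Type
  [lieRingX : LieRing X]
  [lieAlgebraX : LieAlgebra ℝ X]
  ι : X →ₗ[ℝ] carrier →ₗ[ℝ] carrier
  ι_deg : ∀ (v : X) (i : ℤ), ∀ a ∈ deg i, ι v a ∈ deg (i - 1)
  ι_ι : ∀ (v w : X) (a : carrier), ι v (ι w a) = - ι w (ι v a)
  cartan : ∀ (v w : X) (a : carrier),
      (d (ι v (ι w a)) + ι v (d (ι w a))) - ι w (d (ι v a) + ι v (d a)) = ι ⁅v, w⁆ a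

attribute [instance] CartanCalculus.addCommGroup CartanCalculus.module
  CartanCalculus.lieRingX CartanCalculus.lieAlgebraX

namespace CartanCalculus

/-- The Lie derivative `𝓛_v = d ∘ ι_v + ι_v ∘ d`. -/
def L (C : CartanCalculus) (v : C.X) : C.carrier →ₗ[ℝ] C.carrier :=
  C.d ∘ₗ C.ι v + C.ι v ∘ₗ C.d

/-- Iterated contraction: `iotaL [v₁, …, v_k] = ι_{v_k} ∘ ⋯ ∘ ι_{v₁}`, i.e. the
contraction `ι(v₁ ∧ ⋯ ∧ v_k)` (`ι_{v₁}` acts first). -/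
def iotaL (C : CartanCalculus) : List C.X → C.carrier →ₗ[ℝ] C.carrier
  | [] => LinearMap.id
  | v :: vs => (C.iotaL vs).comp (C.ι v)

end CartanCalculus

/-- Interpret a list as a `Fin k`-tuple (junk value `0` out of range). -/
def listToFun {α : Type} [Zero α] (k : ℕ) (l : List α) : Fin k → α :=
  fun m => l.getD m.val 0

/-- A map `𝔤^k → W` is multilinear. -/
def IsMultilinear {𝔤 : Type} [AddCommGroup 𝔤] [Module ℝ 𝔤] {W : Type}
    [AddCommGroup W] [Module ℝ W] {k : ℕ} (ψ : (Fin k → 𝔤) → W) : Prop :=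
  ∀ (x : Fin k → 𝔤) (i : Fin k),
    (∀ a b : 𝔤, ψ (Function.update x i (a + b))
        = ψ (Function.update x i a) + ψ (Function.update x i b)) ∧
    (∀ (c : ℝ) (a : 𝔤), ψ (Function.update x i (c • a)) = c • ψ (Function.update x i a))

/-- A map `𝔤^k → W` is alternating. -/
def IsAlternating {𝔤 : Type} {W : Type} [AddCommGroup W] {k : ℕ}
    (ψ : (Fin k → 𝔤) → W) : Prop :=
  ∀ (x : Fin k → 𝔤) (i j : Fin k), i ≠ j → x i = x j → ψ x = 0

/-- The Chevalley–Eilenberg differential of a `k`-cochain `ψ`: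
`(d_𝔤 ψ)(x₁,…,x_{k+1}) = Σ_{i<j} (-1)^{i+j} ψ([x_i,x_j], x₁, …, x̂_i, …, x̂_j, …, x_{k+1})`
(signs written for 1-based indices, as in the paper). -/
def dCE {𝔤 : Type} [LieRing 𝔤] [LieAlgebra ℝ 𝔤] {W : Type} [AddCommGroup W]
    [Module ℝ W] (k : ℕ) (ψ : (Fin k → 𝔤) → W) : (Fin (k + 1) → 𝔤) → W :=
  fun x => ∑ i : Fin (k + 1), ∑ j : Fin (k + 1),
    if (i : ℕ) < (j : ℕ) then
      ((-1 : ℝ) ^ ((i : ℕ) + (j : ℕ))) •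
        ψ (listToFun k (⁅x i, x j⁆ :: (((List.ofFn x).eraseIdx (j : ℕ)).eraseIdx (i : ℕ))))
    else 0

namespace CartanCalculus

/-- `σ_k(x₁,…,x_k) = ι(v_{x₁} ∧ ⋯ ∧ v_{x_k}) σ` where `v_x = ρ x`. -/
def lower (C : CartanCalculus) {𝔤 : Type} [LieRing 𝔤] [LieAlgebra ℝ 𝔤]
    (ρ : 𝔤 →ₗ⁅ℝ⁆ C.X) (k : ℕ) (σ : C.carrier) : (Fin k → 𝔤) → C.carrier :=
  fun x => C.iotaL (List.ofFn (fun i => ρ (x i))) σ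

/-- `F_k(x₁,…,x_k) = ι(v_{x₁} ∧ ⋯ ∧ v_{x_{k-1}}) (F x_k)`, with `F₀ := 0`. -/
def lowerF (C : CartanCalculus) {𝔤 : Type} [LieRing 𝔤] [LieAlgebra ℝ 𝔤]
    (ρ : 𝔤 →ₗ⁅ℝ⁆ C.X) (F : 𝔤 → C.carrier) : (k : ℕ) → (Fin k → 𝔤) → C.carrier
  | 0 => fun _ => 0
  | (k + 1) => fun x =>
      C.iotaL (List.ofFn (fun i : Fin k => ρ (x i.castSucc))) (F (x (Fin.last k)))

end CartanCalculus

/-- `ς(k) = -(-1)^{k(k+1)/2}`. -/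
def varsigma (k : ℕ) : ℝ := -((-1 : ℝ) ^ (k * (k + 1) / 2))

/-- A homotopy moment map for the invariant closed form `ω ∈ Ω^{n+1}`
(componentwise form of Def. 5.1 in [FRZ]): a family of alternating multilinear maps
`f_k : 𝔤^k → Ω^{n-k}` (`k = 1, …, n`) satisfying the moment map equations. -/
def IsMomentMap (C : CartanCalculus) {𝔤 : Type} [LieRing 𝔤] [LieAlgebra ℝ 𝔤]
    (ρ : 𝔤 →ₗ⁅ℝ⁆ C.X) (n : ℕ) (ω : C.carrier)
    (f : (k : ℕ) → (Fin k → 𝔤) → C.carrier) : Prop :=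
  (∀ k : ℕ, 1 ≤ k → k ≤ n →
      IsMultilinear (f k) ∧ IsAlternating (f k) ∧ ∀ x, f k x ∈ C.deg ((n : ℤ) - (k : ℤ))) ∧
  (∀ x : 𝔤, C.d (f 1 (fun _ => x)) = - C.ι (ρ x) ω) ∧
  (∀ k : ℕ, 2 ≤ k → k ≤ n → ∀ x : Fin k → 𝔤,
      (∑ i : Fin k, ∑ j : Fin k,
        if (i : ℕ) < (j : ℕ) then
          ((-1 : ℝ) ^ ((i : ℕ) + (j : ℕ) + 1)) •
            f (k - 1) (listToFun (k - 1)
              (⁅x i, x j⁆ :: (((List.ofFn x).eraseIdx (j : ℕ)).eraseIdx (i : ℕ))))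
        else 0)
      = C.d (f k x) + varsigma k • C.lower ρ k ω x) ∧
  (∀ x : Fin (n + 1) → 𝔤,
      (∑ i : Fin (n + 1), ∑ j : Fin (n + 1),
        if (i : ℕ) < (j : ℕ) then
          ((-1 : ℝ) ^ ((i : ℕ) + (j : ℕ) + 1)) •
            f n (listToFun n
              (⁅x i, x j⁆ :: (((List.ofFn x).eraseIdx (j : ℕ)).eraseIdx (i : ℕ))))
        else 0)
      = varsigma (n + 1) • C.lower ρ (n + 1) ω x)

/-!
For vectors `v₁, …, vₘ`, iterating Cartan's formula gives
`(-1)ᵐ d ι(v₁ ∧ ⋯ ∧ vₘ) = ι(v₁ ∧ ⋯ ∧ vₘ) d + ∑ᵢ (-1)ⁱ ι(v₁ ∧ ⋯ ∧ v̂ᵢ ∧ ⋯ ∧ vₘ) 𝓛_{vᵢ}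
  + ι(∂(v₁ ∧ ⋯ ∧ vₘ))`
with `∂` the Chevalley–Eilenberg boundary: induct on `m`, moving the innermost contraction `ι_{v₁}`
past `d`, the `𝓛_{vᵢ}` and the brackets. On a closed invariant form only the boundary term survives,
and it computes the Chevalley–Eilenberg differential. For `m = n + 2` the contracted form lies in
degree `-1`, so it vanishes.
-/

theorem ofFn_listToFun {α : Type} [Zero α] {k : ℕ} {l : List α} (hl : l.length = k) :
    List.ofFn (listToFun k l) = l := by
  subst hl
  exact List.ext_getElem (by simp) fun i _ hi => by simp [listToFun, hi]

namespace CartanCalculus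

variable (C : CartanCalculus)

theorem d_ι (v : C.X) (a : C.carrier) : C.d (C.ι v a) = C.L v a - C.ι v (C.d a) :=
  eq_sub_of_add_eq rfl

theorem L_ι (v w : C.X) (a : C.carrier) :
    C.L v (C.ι w a) = C.ι w (C.L v a) + C.ι ⁅v, w⁆ a := by
  rw [← sub_eq_iff_eq_add', ← C.cartan v w a]
  rfl

theorem iotaL_cons (v : C.X) (l : List C.X) (a : C.carrier) :
    C.iotaL (v :: l) a = C.iotaL l (C.ι v a) :=
  rfl

theorem iotaL_cons_cons_swap (v w : C.X) (l : List C.X) (a : C.carrier) :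
    C.iotaL (v :: w :: l) a = -C.iotaL (w :: v :: l) a := by
  simp only [iotaL_cons, C.ι_ι w v a, map_neg]

theorem iotaL_L_ι (v w : C.X) (l : List C.X) (a : C.carrier) :
    C.iotaL l (C.L v (C.ι w a)) = C.iotaL (w :: l) (C.L v a) - C.iotaL (⁅w, v⁆ :: l) a := by
  rw [L_ι, ← lie_skew]
  simp only [iotaL_cons, map_add, map_neg, LinearMap.neg_apply, sub_eq_add_neg]

theorem iotaL_mem_deg {i : ℤ} {a : C.carrier} (ha : a ∈ C.deg i) (l : List C.X) :
    C.iotaL l a ∈ C.deg (i - l.length) := by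
  induction l generalizing i a with
  | nil => simpa [iotaL] using ha
  | cons v l ih =>
    rw [iotaL_cons, List.length_cons, Nat.cast_succ, add_comm, ← sub_sub]
    exact ih (C.ι_deg v i a ha)

/-- Contraction with the Chevalley–Eilenberg boundary
`∂(v₁ ∧ ⋯ ∧ vₘ) = ∑_{i < j} (-1)^{i + j} [vᵢ, vⱼ] ∧ v₁ ∧ ⋯ ∧ v̂ᵢ ∧ ⋯ ∧ v̂ⱼ ∧ ⋯ ∧ vₘ`, the form in
which `dCE` acts on iterated contractions. Indices start at `0` here; the sign is the same. -/
def iotaBoundary {m : ℕ} (v : Fin m → C.X) (a : C.carrier) : C.carrier :=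
  ∑ i : Fin m, ∑ j : Fin m,
    if i < j then
      (-1 : ℝ) ^ (i + j : ℕ) •
        C.iotaL (⁅v i, v j⁆ :: ((List.ofFn v).eraseIdx j).eraseIdx i) a
    else 0

theorem iotaBoundary_succ {m : ℕ} (v : Fin (m + 1) → C.X) (a : C.carrier) :
    C.iotaBoundary v a =
      ∑ j : Fin m, (-1 : ℝ) ^ (j + 1 : ℕ) •
          C.iotaL (⁅v 0, v j.succ⁆ :: (List.ofFn (Fin.tail v)).eraseIdx j) a -
        C.iotaBoundary (Fin.tail v) (C.ι (v 0) a) := by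
  have tail_terms : ∀ i j : Fin m,
      (-1 : ℝ) ^ (i.succ + j.succ : ℕ) •
          C.iotaL (⁅v i.succ, v j.succ⁆ ::
            ((List.ofFn v).eraseIdx j.succ).eraseIdx i.succ) a =
        -((-1 : ℝ) ^ (i + j : ℕ) •
          C.iotaL (⁅Fin.tail v i, Fin.tail v j⁆ ::
            ((List.ofFn (Fin.tail v)).eraseIdx j).eraseIdx i) (C.ι (v 0) a)) := by
    intro i j
    rw [List.ofFn_succ, Fin.val_succ, Fin.val_succ, List.eraseIdx_cons_succ,
      List.eraseIdx_cons_succ, iotaL_cons_cons_swap, iotaL_cons, smul_neg]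
    congr 2
    ring
  simp only [iotaBoundary, Fin.sum_univ_succ, Fin.succ_lt_succ_iff, Fin.succ_pos, Fin.not_lt_zero,
    if_true, if_false, zero_add, tail_terms, sub_eq_add_neg, ← Finset.sum_neg_distrib]
  congr 1
  · simp [List.ofFn_succ, Fin.tail_def]
  · simp only [neg_ite, neg_zero]

theorem neg_one_pow_smul_d_iotaL {m : ℕ} (v : Fin m → C.X) (a : C.carrier) :
    (-1 : ℝ) ^ m • C.d (C.iotaL (List.ofFn v) a) =
      C.iotaL (List.ofFn v) (C.d a) +
        ∑ i : Fin m, (-1 : ℝ) ^ (i + 1 : ℕ) •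
          C.iotaL ((List.ofFn v).eraseIdx i) (C.L (v i) a) +
        C.iotaBoundary v a := by
  induction m generalizing a with
  | zero => simp [iotaBoundary, iotaL]
  | succ m ih =>
    have lie_terms : ∑ i : Fin (m + 1), (-1 : ℝ) ^ (i + 1 : ℕ) •
          C.iotaL ((List.ofFn v).eraseIdx i) (C.L (v i) a) =
        -C.iotaL (List.ofFn (Fin.tail v)) (C.L (v 0) a) -
          ∑ i : Fin m, (-1 : ℝ) ^ (i + 1 : ℕ) •
            C.iotaL (v 0 :: (List.ofFn (Fin.tail v)).eraseIdx i) (C.L (v i.succ) a) := by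
      rw [Fin.sum_univ_succ]
      simp [pow_succ, sub_eq_add_neg, List.ofFn_succ, Fin.tail_def]
    calc
      _ = -((-1 : ℝ) ^ m • C.d (C.iotaL (List.ofFn (Fin.tail v)) (C.ι (v 0) a))) := by
        rw [List.ofFn_succ, iotaL_cons, pow_succ, mul_neg_one, neg_smul, Fin.tail_def]
      _ = -(C.iotaL (List.ofFn (Fin.tail v)) (C.L (v 0) a - C.ι (v 0) (C.d a)) +
            ∑ i : Fin m, (-1 : ℝ) ^ (i + 1 : ℕ) •
              (C.iotaL (v 0 :: (List.ofFn (Fin.tail v)).eraseIdx i) (C.L (v i.succ) a) -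
                C.iotaL (⁅v 0, v i.succ⁆ :: (List.ofFn (Fin.tail v)).eraseIdx i) a) +
            C.iotaBoundary (Fin.tail v) (C.ι (v 0) a)) := by
        simp only [ih, d_ι, iotaL_L_ι, Fin.tail_def]
      _ = C.iotaL (List.ofFn v) (C.d a) + _ + C.iotaBoundary v a := by
        rw [lie_terms, iotaBoundary_succ, List.ofFn_succ, iotaL_cons, ← Fin.tail_def]
        simp only [smul_sub, Finset.sum_sub_distrib, map_sub]
        abel

section Action

variable {𝔤 : Type} [LieRing 𝔤] [LieAlgebra ℝ 𝔤] (ρ : 𝔤 →ₗ⁅ℝ⁆ C.X)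

theorem lower_eq_zero_of_lt {i : ℤ} {σ : C.carrier} (hσ : σ ∈ C.deg i) {k : ℕ} (hik : i < k)
    (x : Fin k → 𝔤) : C.lower ρ k σ x = 0 := by
  have mem_deg := C.iotaL_mem_deg hσ (List.ofFn fun i => ρ (x i))
  rwa [List.length_ofFn, C.deg_neg _ (sub_neg.mpr hik), Submodule.mem_bot] at mem_deg

theorem dCE_lower_eq_iotaBoundary (k : ℕ) (σ : C.carrier) (x : Fin (k + 1) → 𝔤) :
    dCE k (C.lower ρ k σ) x = C.iotaBoundary (fun i => ρ (x i)) σ := by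
  have lower_bracket : ∀ i j : Fin (k + 1), i < j →
      C.lower ρ k σ (listToFun k (⁅x i, x j⁆ :: ((List.ofFn x).eraseIdx j).eraseIdx i)) =
        C.iotaL (⁅ρ (x i), ρ (x j)⁆ ::
          ((List.ofFn fun i => ρ (x i)).eraseIdx j).eraseIdx i) σ := by
    intro i j hij
    have length_eq : (⁅x i, x j⁆ :: ((List.ofFn x).eraseIdx j).eraseIdx i).length = k := by
      grind
    rw [lower, List.ofFn_comp' _ ρ, ofFn_listToFun length_eq, List.ofFn_comp' x ρ, List.map_cons,
      List.eraseIdx_map, List.eraseIdx_map, LieHom.map_lie]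
  simp only [dCE, iotaBoundary, Fin.val_fin_lt]
  exact Fintype.sum_congr _ _ fun i => Fintype.sum_congr _ _ fun j =>
    ite_congr rfl (fun hij => by rw [lower_bracket i j hij]) fun _ => rfl

theorem dCE_lower_of_closed_of_invariant {σ : C.carrier} (hσ : C.d σ = 0)
    (hinv : ∀ x : 𝔤, C.L (ρ x) σ = 0) (k : ℕ) (x : Fin (k + 1) → 𝔤) :
    dCE k (C.lower ρ k σ) x = (-1 : ℝ) ^ (k + 1) • C.d (C.lower ρ (k + 1) σ x) := by
  rw [dCE_lower_eq_iotaBoundary, lower, neg_one_pow_smul_d_iotaL]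
  simp [hσ, hinv]

end Action

end CartanCalculus

/-- `ω̃` is `d_tot`-closed, Corollary 2.4 of the paper.
For an invariant closed `ω ∈ Ω^{n+1}`: `d(ω₁ x) = 0` for all `x ∈ 𝔤`;
`(d_𝔤 ω_k)(x) = (-1)^{k+1} d(ω_{k+1}(x))` for `1 ≤ k ≤ n` (i.e. degrees `2 ≤ k+1 ≤ n+1`);
and `d_𝔤 ω_{n+1} = 0`. Equivalently `d_tot ω̃ = 0`. -/
theorem omega_tilde_closed (C : CartanCalculus) {𝔤 : Type} [LieRing 𝔤] [LieAlgebra ℝ 𝔤]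
    (ρ : 𝔤 →ₗ⁅ℝ⁆ C.X) (n : ℕ) (hn : 1 ≤ n) (ω : C.carrier)
    (hω : ω ∈ C.deg ((n : ℤ) + 1)) (hcl : C.d ω = 0)
    (hinv : ∀ x : 𝔤, C.L (ρ x) ω = 0) :
    (∀ x : 𝔤, C.d (C.ι (ρ x) ω) = 0) ∧
    (∀ k : ℕ, 1 ≤ k → k ≤ n → ∀ x : Fin (k + 1) → 𝔤,
      dCE k (C.lower ρ k ω) x = ((-1 : ℝ) ^ (k + 1)) • C.d (C.lower ρ (k + 1) ω x)) ∧
    (∀ x : Fin (n + 2) → 𝔤, dCE (n + 1) (C.lower ρ (n + 1) ω) x = 0) := by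
  refine ⟨fun x => ?_, fun k _ _ x => C.dCE_lower_of_closed_of_invariant ρ hcl hinv k x,
    fun x => ?_⟩
  · rw [C.d_ι, hinv, hcl, map_zero, sub_zero]
  · rw [C.dCE_lower_of_closed_of_invariant ρ hcl hinv,
      C.lower_eq_zero_of_lt ρ hω (by push_cast; linarith), map_zero, smul_zero]
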